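/- Let n > 1 be an integer, 𝔐 a Γ-ring, 𝔊 a Δ-ring, and (φ, ψ) an n-multiplicative isomorphism of 𝔐 onto 𝔊. Then φ(0) = 0, and consequently φ⁻¹(0) = 0. -/

import Mathlib

/-! Evaluate the multiplicativity identity at `x₀ = φ⁻¹(0)` and `xᵢ = 0` for `i ≥ 1`. As `n ≥ 2`
there is such an index, so the product in `M` vanishes, while the product in the target vanishes
because its first factor is `φ(φ⁻¹(0)) = 0`. Hence `φ(0) = 0`. -/

/-- A `Γ`-ring in the sense of Barnes: abelian groups `M` and `Γ` with a triple product
`M → Γ → M → M` that is additive in each variable and associative. -/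
structure GammaRing (M : Type*) (Γ : Type*) [AddCommGroup M] [AddCommGroup Γ] where
  tri : M → Γ → M → M
  add_left : ∀ x y α z, tri (x + y) α z = tri x α z + tri y α z
  add_right : ∀ x α y z, tri x α (y + z) = tri x α y + tri x α z
  add_mid : ∀ x α β y, tri x (α + β) y = tri x α y + tri x β y
  assoc : ∀ x α y β z, tri (tri x α y) β z = tri x α (tri y β z)

namespace GammaRing

variable {M Γ : Type*} [AddCommGroup M] [AddCommGroup Γ]

/-- The product `x₀ γ₀ x₁ γ₁ ⋯ γ_{k-1} x_k` (right associated). -/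
def prodF (G : GammaRing M Γ) : (k : ℕ) → (Fin (k + 1) → M) → (Fin k → Γ) → M
  | 0, x, _ => x 0
  | k + 1, x, γ => G.tri (x 0) (γ 0) (G.prodF k (fun i => x i.succ) (fun i => γ i.succ))

end GammaRing

namespace GammaRing

variable {M Γ : Type*} [AddCommGroup M] [AddCommGroup Γ]

lemma tri_zero_left (G : GammaRing M Γ) (α : Γ) (z : M) : G.tri 0 α z = 0 := by
  simpa using G.add_left 0 0 α z

lemma tri_zero_right (G : GammaRing M Γ) (x : M) (α : Γ) : G.tri x α 0 = 0 := by
  simpa using G.add_right x α 0 0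

lemma prodF_eq_zero_of_head (G : GammaRing M Γ) (k : ℕ) (x : Fin (k + 1) → M) (γ : Fin k → Γ)
    (hx : x 0 = 0) : G.prodF k x γ = 0 := by
  cases k with
  | zero => simpa [prodF] using hx
  | succ k => simp [prodF, hx, tri_zero_left]

end GammaRing

/-- For an `n`-multiplicative isomorphism `(φ, ψ)` one has `φ(0) = 0` and `φ⁻¹(0) = 0`. -/
theorem gammaRing_nMulIso_map_zero
    {M Γ G' Δ : Type*} [AddCommGroup M] [AddCommGroup Γ] [AddCommGroup G'] [AddCommGroup Δ]
    (G : GammaRing M Γ) (H : GammaRing G' Δ)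
    (n : ℕ) (hn : 1 < n)
    (φ : M ≃ G') (ψ : Γ ≃ Δ)
    (hmul : ∀ (x : Fin (n - 1 + 1) → M) (γ : Fin (n - 1) → Γ),
      φ (G.prodF (n - 1) x γ) = H.prodF (n - 1) (fun i => φ (x i)) (fun i => ψ (γ i))) :
    φ 0 = 0 ∧ φ.symm 0 = 0 := by
  obtain ⟨k, rfl⟩ : ∃ k, n = k + 1 + 1 := ⟨n - 2, by omega⟩
  change ∀ (x : Fin (k + 1 + 1) → M) (γ : Fin (k + 1) → Γ),
    φ (G.prodF (k + 1) x γ) = H.prodF (k + 1) (fun i => φ (x i)) (fun i => ψ (γ i)) at hmul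
  have h0 : φ 0 = 0 := by
    have h := hmul (Fin.cons (φ.symm 0) (fun _ => 0)) (fun _ => 0)
    rw [H.prodF_eq_zero_of_head _ _ _ (by simp)] at h
    rwa [GammaRing.prodF, G.prodF_eq_zero_of_head k _ _ (by simp), G.tri_zero_right] at h
  exact ⟨h0, by rw [← h0, φ.symm_apply_apply]⟩
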